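/- Let a ∈ ℝ, c ≥ 0, and let f : [a,∞) → ℝ be a twice continuously differentiable positive function such that f(r) → ∞ and f''(r)/f(r) → c² as r → ∞. Then f'(r)/f(r) → c as r → ∞. -/

import Mathlib

/-!
The ratio `g = f' / f` solves the Riccati equation `g' = q - g ^ 2` with `q = f'' / f → c ^ 2`.
Above any level `L > c` the derivative of `g` is bounded above by a negative constant, so `g` falls
below `L`, and it cannot cross `L` upwards again. Since `f → ∞`, `f'` is positive at arbitrarily
large arguments. If `c > 0`, this forces `g` to become and stay nonnegative, after which it rises
past every level `L < c`. If `c = 0`, then `g` can cross a level `L < 0` only downwards and would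
then stay below it for ever, contradicting the recurring positivity of `f'`.
-/

open Filter Set Topology

section Barrier

variable {g g' : ℝ → ℝ} {L δ : ℝ}

theorem eventually_le_of_frequently_le_of_deriv_neg
    (hg : ∀ᶠ x in atTop, HasDerivAt g (g' x) x) (hL : ∀ᶠ x in atTop, g x = L → g' x < 0)
    (hfreq : ∃ᶠ x in atTop, g x ≤ L) : ∀ᶠ x in atTop, g x ≤ L := by
  obtain ⟨R, hR⟩ := eventually_atTop.1 (hg.and hL)
  obtain ⟨x₀, hx₀, hgx₀⟩ := frequently_atTop.1 hfreq R
  filter_upwards [eventually_ge_atTop x₀] with x hx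
  exact image_le_of_deriv_right_lt_deriv_boundary' (B := fun _ ↦ L) (B' := fun _ ↦ 0)
    (fun y hy ↦ (hR y (hx₀.trans hy.1)).1.continuousAt.continuousWithinAt)
    (fun y hy ↦ (hR y (hx₀.trans hy.1)).1.hasDerivWithinAt) hgx₀ continuousOn_const
    (fun y _ ↦ hasDerivWithinAt_const y _ L)
    (fun y hy ↦ (hR y (hx₀.trans hy.1)).2) (right_mem_Icc.2 hx)

theorem eventually_sub_le_mul_sub_of_eventually_deriv_le {C : ℝ}
    (hg : ∀ᶠ x in atTop, HasDerivAt g (g' x) x) (hC : ∀ᶠ x in atTop, g' x ≤ C) :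
    ∀ᶠ x₀ in atTop, ∀ x ≥ x₀, g x - g x₀ ≤ C * (x - x₀) := by
  filter_upwards [eventually_forall_ge_atTop.2 (hg.and hC)] with x₀ h x hx
  refine (convex_Ici x₀).image_sub_le_mul_sub_of_deriv_le
    (fun y hy ↦ (h y hy).1.continuousAt.continuousWithinAt)
    (fun y hy ↦ (h y (interior_subset hy)).1.differentiableAt.differentiableWithinAt)
    (fun y hy ↦ ?_) x₀ self_mem_Ici x hx hx
  obtain ⟨hderiv, hle⟩ := h y (interior_subset hy)
  exact hderiv.deriv.trans_le hle

theorem tendsto_atBot_of_eventually_deriv_le_neg (hδ : 0 < δ)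
    (hg : ∀ᶠ x in atTop, HasDerivAt g (g' x) x) (hg' : ∀ᶠ x in atTop, g' x ≤ -δ) :
    Tendsto g atTop atBot := by
  obtain ⟨x₀, hx₀⟩ := (eventually_sub_le_mul_sub_of_eventually_deriv_le hg hg').exists
  have hline : Tendsto (fun x ↦ g x₀ + -δ * (x - x₀)) atTop atBot :=
    tendsto_atBot_add_const_left _ _ ((tendsto_atTop_add_const_right _ (-x₀) tendsto_id)
      |>.const_mul_atTop_of_neg (neg_neg_of_pos hδ))
  refine tendsto_atBot_mono' _ ?_ hline
  filter_upwards [eventually_ge_atTop x₀] with x hx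
  linarith [hx₀ x hx]

theorem frequently_deriv_pos_of_tendsto_atTop
    (hg : ∀ᶠ x in atTop, HasDerivAt g (g' x) x) (hlim : Tendsto g atTop atTop) :
    ∃ᶠ x in atTop, 0 < g' x := by
  intro hnonpos
  obtain ⟨x₀, hx₀⟩ := (eventually_sub_le_mul_sub_of_eventually_deriv_le hg
    (hnonpos.mono fun _ ↦ not_lt.1)).exists
  obtain ⟨x, hgx, hx⟩ := ((hlim.eventually_gt_atTop (g x₀)).and (eventually_ge_atTop x₀)).exists
  linarith [hx₀ x hx]

theorem eventually_le_of_deriv_le_neg (hδ : 0 < δ)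
    (hg : ∀ᶠ x in atTop, HasDerivAt g (g' x) x) (hL : ∀ᶠ x in atTop, L ≤ g x → g' x ≤ -δ) :
    ∀ᶠ x in atTop, g x ≤ L := by
  refine eventually_le_of_frequently_le_of_deriv_neg hg
    (hL.mono fun x hx hgx ↦ (hx hgx.ge).trans_lt (neg_neg_of_pos hδ)) fun habove ↦ ?_
  have hbot : Tendsto g atTop atBot := by
    refine tendsto_atBot_of_eventually_deriv_le_neg hδ hg ?_
    filter_upwards [hL, habove] with x hx hLx
    exact hx (not_le.1 hLx).le
  obtain ⟨x, hx, hLx⟩ := ((hbot.eventually_le_atBot L).and habove).exists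
  exact hLx hx

end Barrier

section Riccati

variable {g q : ℝ → ℝ} {ℓ L : ℝ}

theorem riccati_eventually_le (hg : ∀ᶠ x in atTop, HasDerivAt g (q x - g x ^ 2) x)
    (hq : Tendsto q atTop (𝓝 ℓ)) (hL₀ : 0 ≤ L) (hL : ℓ < L ^ 2) : ∀ᶠ x in atTop, g x ≤ L := by
  obtain ⟨m, hℓm, hmL⟩ := exists_between hL
  refine eventually_le_of_deriv_le_neg (sub_pos.2 hmL) hg ?_
  filter_upwards [hq.eventually_lt_const hℓm] with x hqx hLx
  have hsq : L ^ 2 ≤ g x ^ 2 := pow_le_pow_left₀ hL₀ hLx 2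
  linarith

theorem riccati_eventually_gt_of_frequently_gt
    (hg : ∀ᶠ x in atTop, HasDerivAt g (q x - g x ^ 2) x) (hq : Tendsto q atTop (𝓝 ℓ))
    (hL : ℓ < L ^ 2) (hfreq : ∃ᶠ x in atTop, L < g x) : ∀ᶠ x in atTop, L < g x := by
  have hcross : ∀ᶠ x in atTop, g x = L → q x - g x ^ 2 < 0 := by
    filter_upwards [hq.eventually_lt_const hL] with x hqx hgx
    rw [hgx]
    exact sub_neg.2 hqx
  by_contra hnot
  have hbelow : ∃ᶠ x in atTop, g x ≤ L := (not_eventually.1 hnot).mono fun _ ↦ not_lt.1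
  exact hfreq ((eventually_le_of_frequently_le_of_deriv_neg hg hcross hbelow).mono
    fun _ ↦ not_lt.2)

theorem riccati_eventually_nonneg_of_frequently_nonneg
    (hg : ∀ᶠ x in atTop, HasDerivAt g (q x - g x ^ 2) x) (hq : Tendsto q atTop (𝓝 ℓ))
    (hℓ : 0 < ℓ) (hfreq : ∃ᶠ x in atTop, 0 ≤ g x) : ∀ᶠ x in atTop, 0 ≤ g x := by
  have hneg : ∀ᶠ x in atTop, -g x ≤ 0 := by
    refine eventually_le_of_frequently_le_of_deriv_neg (hg.mono fun x hx ↦ hx.fun_neg) ?_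
      (hfreq.mono fun x ↦ neg_nonpos.2)
    filter_upwards [hq.eventually_const_lt hℓ] with x hqx hgx
    rw [neg_eq_zero.1 hgx]
    linarith
  exact hneg.mono fun x ↦ neg_nonpos.1

theorem riccati_eventually_ge (hg : ∀ᶠ x in atTop, HasDerivAt g (q x - g x ^ 2) x)
    (hq : Tendsto q atTop (𝓝 ℓ)) (hL : L ^ 2 < ℓ) (hfreq : ∃ᶠ x in atTop, 0 ≤ g x) :
    ∀ᶠ x in atTop, L ≤ g x := by
  have hnonneg : ∀ᶠ x in atTop, 0 ≤ g x :=
    riccati_eventually_nonneg_of_frequently_nonneg hg hq ((sq_nonneg L).trans_lt hL) hfreq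
  obtain ⟨m, hLm, hmℓ⟩ := exists_between hL
  have hneg : ∀ᶠ x in atTop, -g x ≤ -L := by
    refine eventually_le_of_deriv_le_neg (sub_pos.2 hLm) (hg.mono fun x hx ↦ hx.fun_neg) ?_
    filter_upwards [hq.eventually_const_lt hmℓ, hnonneg] with x hqx hgx hLx
    have hsq : g x ^ 2 ≤ L ^ 2 := pow_le_pow_left₀ hgx (neg_le_neg_iff.1 hLx) 2
    linarith
  exact hneg.mono fun x ↦ neg_le_neg_iff.1

theorem riccati_tendsto_of_frequently_nonneg {c : ℝ} (hc : 0 ≤ c)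
    (hg : ∀ᶠ x in atTop, HasDerivAt g (q x - g x ^ 2) x) (hq : Tendsto q atTop (𝓝 (c ^ 2)))
    (hfreq : ∃ᶠ x in atTop, 0 ≤ g x) : Tendsto g atTop (𝓝 c) := by
  refine tendsto_order.2 ⟨fun b hb ↦ ?_, fun b hb ↦ ?_⟩
  · rcases hc.eq_or_lt with rfl | hcpos
    · exact riccati_eventually_gt_of_frequently_gt hg hq (by nlinarith)
        (hfreq.mono fun x ↦ hb.trans_le)
    · obtain ⟨L, hbL, hLc⟩ := exists_between (max_lt hb hcpos)
      have hsq : L ^ 2 < c ^ 2 := pow_lt_pow_left₀ hLc ((le_max_right b 0).trans hbL.le) two_ne_zero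
      exact (riccati_eventually_ge hg hq hsq hfreq).mono
        fun x ↦ ((le_max_left b 0).trans_lt hbL).trans_le
  · obtain ⟨L, hcL, hLb⟩ := exists_between hb
    have hsq : c ^ 2 < L ^ 2 := pow_lt_pow_left₀ hcL hc two_ne_zero
    exact (riccati_eventually_le hg hq (hc.trans hcL.le) hsq).mono fun x hx ↦ hx.trans_lt hLb

end Riccati

theorem hasDerivAt_deriv_div_self {𝕜 : Type*} [NontriviallyNormedField 𝕜] {f f' : 𝕜 → 𝕜}
    {f'' x : 𝕜} (hf : HasDerivAt f (f' x) x) (hf' : HasDerivAt f' f'' x) (hx : f x ≠ 0) :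
    HasDerivAt (fun y ↦ f' y / f y) (f'' / f x - (f' x / f x) ^ 2) x := by
  refine (hf'.fun_div hf hx).congr_deriv ?_
  field_simp

theorem eventually_hasDerivAt_of_hasDerivWithinAt_Ici {E : Type*} [NormedAddCommGroup E]
    [NormedSpace ℝ E] {f f' : ℝ → E} {a : ℝ}
    (hf : ∀ x ∈ Ici a, HasDerivWithinAt f (f' x) (Ici a) x) :
    ∀ᶠ x in atTop, HasDerivAt f (f' x) x :=
  (eventually_gt_atTop a).mono fun x hx ↦ (hf x hx.le).hasDerivAt (Ici_mem_nhds hx)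

theorem deriv_ratio_tendsto_of_second_deriv_ratio_tendsto_general {c : ℝ} (hc : 0 ≤ c)
    {f f' f'' : ℝ → ℝ} (hfpos : ∀ᶠ r in atTop, 0 < f r)
    (hf' : ∀ᶠ r in atTop, HasDerivAt f (f' r) r) (hf'' : ∀ᶠ r in atTop, HasDerivAt f' (f'' r) r)
    (hfreq : ∃ᶠ r in atTop, 0 ≤ f' r)
    (hratio : Tendsto (fun r ↦ f'' r / f r) atTop (𝓝 (c ^ 2))) :
    Tendsto (fun r ↦ f' r / f r) atTop (𝓝 c) := by
  refine riccati_tendsto_of_frequently_nonneg hc ?_ hratio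
    ((hfreq.and_eventually hfpos).mono fun r hr ↦ div_nonneg hr.1 hr.2.le)
  filter_upwards [hf', hf'', hfpos] with r hr' hr'' hpos
  exact hasDerivAt_deriv_div_self hr' hr'' hpos.ne'

/-- If `f : [a,∞) → ℝ` is a positive, twice continuously differentiable function
with `f(r) → ∞` and `f''(r)/f(r) → c²` as `r → ∞` (where `c ≥ 0`), then
`f'(r)/f(r) → c` as `r → ∞`. -/
theorem deriv_ratio_tendsto_of_second_deriv_ratio_tendsto
    (a c : ℝ) (hc : 0 ≤ c) (f f' f'' : ℝ → ℝ)
    (hfpos : ∀ r ∈ Set.Ici a, 0 < f r)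
    (hf' : ∀ r ∈ Set.Ici a, HasDerivWithinAt f (f' r) (Set.Ici a) r)
    (hf'' : ∀ r ∈ Set.Ici a, HasDerivWithinAt f' (f'' r) (Set.Ici a) r)
    (hf''cont : ContinuousOn f'' (Set.Ici a))
    (hfinf : Filter.Tendsto f Filter.atTop Filter.atTop)
    (hratio : Filter.Tendsto (fun r => f'' r / f r) Filter.atTop (nhds (c ^ 2))) :
    Filter.Tendsto (fun r => f' r / f r) Filter.atTop (nhds c) := by
  have hderiv := eventually_hasDerivAt_of_hasDerivWithinAt_Ici hf'
  exact deriv_ratio_tendsto_of_second_deriv_ratio_tendsto_general hc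
    ((eventually_ge_atTop a).mono hfpos) hderiv (eventually_hasDerivAt_of_hasDerivWithinAt_Ici hf'')
    ((frequently_deriv_pos_of_tendsto_atTop hderiv hfinf).mono fun _ ↦ le_of_lt) hratio
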